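/- Let ξ be Voiculescu's alternative rotation: ξ(b₀Xb₁⋯Xb_n) = Xb₁⋯Xb_n b₀, and θ(p) = [X, p]. Then for q ∈ B⟨X⟩, the equation δ_{X:B}[p] = q has a solution p ∈ B⟨X⟩ if and only if (ξ∘θ)[q] = 0. -/

import Mathlib

open scoped TensorProduct

noncomputable section

/-- `(A, ι, X)` is the free product `B *_ℂ ℂ⟨X⟩`, characterized by its universal
property: every algebra map `φ : B → C` together with a choice of element `x ∈ C`
extends uniquely to an algebra map `A → C` sending `X` to `x`. -/
def IsFreeProduct {B A : Type} [Ring B] [Algebra ℂ B] [Ring A] [Algebra ℂ A]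
    (ι : B →ₐ[ℂ] A) (X : A) : Prop :=
  ∀ (C : Type) [Ring C] [Algebra ℂ C], ∀ (φ : B →ₐ[ℂ] C) (x : C),
    ∃! ψ : A →ₐ[ℂ] C, ψ.comp ι = φ ∧ ψ X = x

/-- the monomial `b₀ X b₁ ⋯ X bₙ`, where `bs = [b₁, …, bₙ]`. -/
def mono {B A : Type} [Ring B] [Algebra ℂ B] [Ring A] [Algebra ℂ A]
    (ι : B →ₐ[ℂ] A) (X : A) (b0 : B) (bs : List B) : A :=
  ι b0 * (bs.map (fun b => X * ι b)).prod

/-- the cyclic derivative `δ = μ ∘ σ ∘ ∂` associated with a difference quotient `D`. -/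
def cyclicDer {A : Type} [Ring A] [Algebra ℂ A] (D : A →ₗ[ℂ] A ⊗[ℂ] A) : A →ₗ[ℂ] A :=
  (LinearMap.mul' ℂ A) ∘ₗ (TensorProduct.comm ℂ A A).toLinearMap ∘ₗ D

/-- the operation `u # b`, determined by `(a ⊗ c) # b = a b c`. -/
def sharp {A : Type} [Ring A] [Algebra ℂ A] (u : A ⊗[ℂ] A) (b : A) : A :=
  LinearMap.mul' ℂ A (u * (b ⊗ₜ[ℂ] (1 : A)))

/-- the divergence operator `∂* : u ↦ u # X`, i.e. `(a ⊗ c) ↦ a X c`. -/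
def divg {A : Type} [Ring A] [Algebra ℂ A] (X : A) : A ⊗[ℂ] A →ₗ[ℂ] A :=
  (LinearMap.mul' ℂ A) ∘ₗ (LinearMap.mulRight ℂ (X ⊗ₜ[ℂ] (1 : A)))

/-- the number operator `N = ∂* ∘ ∂`. -/
def numOp {A : Type} [Ring A] [Algebra ℂ A] (X : A) (D : A →ₗ[ℂ] A ⊗[ℂ] A) :
    A →ₗ[ℂ] A :=
  divg X ∘ₗ D


section Helpers

variable {B A : Type} [Ring B] [Algebra ℂ B] [Ring A] [Algebra ℂ A]

/-- the product `X b₁ ⋯ X bₙ` -/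
def Pw (ι : B →ₐ[ℂ] A) (X : A) (l : List B) : A := (l.map (fun b => X * ι b)).prod

theorem Pw_nil (ι : B →ₐ[ℂ] A) (X : A) : Pw ι X [] = 1 := by simp [Pw]

theorem Pw_cons (ι : B →ₐ[ℂ] A) (X : A) (c : B) (l : List B) :
    Pw ι X (c :: l) = X * ι c * Pw ι X l := by simp [Pw]

theorem Pw_append (ι : B →ₐ[ℂ] A) (X : A) (l m : List B) :
    Pw ι X (l ++ m) = Pw ι X l * Pw ι X m := by simp [Pw]

theorem mono_eq (ι : B →ₐ[ℂ] A) (X : A) (c : B) (l : List B) :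
    mono ι X c l = ι c * Pw ι X l := rfl

theorem X_mul_mono (ι : B →ₐ[ℂ] A) (X : A) (c : B) (l : List B) :
    X * mono ι X c l = Pw ι X (c :: l) := by rw [mono_eq, Pw_cons, mul_assoc]

theorem adjoin_top {ι : B →ₐ[ℂ] A} {X : A} (hfree : IsFreeProduct ι X) (a : A) :
    a ∈ Algebra.adjoin ℂ (Set.range ι ∪ {X}) := by
  set S := Algebra.adjoin ℂ (Set.range ι ∪ {X}) with hS
  have hι : ∀ b, ι b ∈ S := fun b => Algebra.subset_adjoin (Or.inl ⟨b, rfl⟩)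
  have hX : X ∈ S := Algebra.subset_adjoin (Or.inr rfl)
  obtain ⟨ψ, ⟨h1, h2⟩, -⟩ := hfree S (ι.codRestrict S hι) ⟨X, hX⟩
  have key : S.val.comp ψ = AlgHom.id ℂ A := by
    refine (hfree A ι X).unique ⟨?_, ?_⟩ ⟨?_, ?_⟩
    · ext b
      have := DFunLike.congr_fun h1 b
      simp only [AlgHom.comp_apply] at this ⊢
      rw [this]; rfl
    · simp [h2]
    · ext b; rfl
    · rfl
  have := DFunLike.congr_fun key a
  simp only [AlgHom.comp_apply, AlgHom.id_apply] at this
  rw [← this]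
  exact (ψ a).2

theorem span_mono {ι : B →ₐ[ℂ] A} {X : A} (hfree : IsFreeProduct ι X) (a : A) :
    a ∈ Submodule.span ℂ {x | ∃ b l, x = mono ι X b l} := by
  set W := Submodule.span ℂ {x | ∃ b l, x = mono ι X b l} with hW
  have key : ∀ w ∈ W, a * w ∈ W := by
    induction adjoin_top hfree a using Algebra.adjoin_induction with
    | mem x hx =>
      intro w hw
      induction hw using Submodule.span_induction with
      | mem w hw =>
        obtain ⟨b, l, rfl⟩ := hw
        rcases hx with ⟨c, rfl⟩ | hx
        · exact Submodule.subset_span ⟨c * b, l, by simp [mono_eq, mul_assoc]⟩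
        · rw [Set.mem_singleton_iff.1 hx]
          exact Submodule.subset_span ⟨1, b :: l, by rw [X_mul_mono]; simp [mono_eq]⟩
      | zero => simp
      | add u v _ _ hu hv => rw [mul_add]; exact W.add_mem hu hv
      | smul c u _ hu => rw [mul_smul_comm]; exact W.smul_mem c hu
    | algebraMap r =>
      intro w hw
      rw [← Algebra.smul_def]; exact W.smul_mem r hw
    | add x y _ _ hx hy =>
      intro w hw; rw [add_mul]; exact W.add_mem (hx w hw) (hy w hw)
    | mul x y _ _ hx hy =>
      intro w hw; rw [mul_assoc]; exact hx _ (hy w hw)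
  have h1 : (1 : A) ∈ W := Submodule.subset_span ⟨1, [], by simp [mono_eq, Pw_nil]⟩
  simpa using key 1 h1

theorem mono_ext {ι : B →ₐ[ℂ] A} {X : A} (hfree : IsFreeProduct ι X)
    {M : Type} [AddCommGroup M] [Module ℂ M] (f g : A →ₗ[ℂ] M)
    (h : ∀ b l, f (mono ι X b l) = g (mono ι X b l)) (a : A) : f a = g a := by
  induction span_mono hfree a using Submodule.span_induction with
  | mem w hw => obtain ⟨b, l, rfl⟩ := hw; exact h b l
  | zero => simp
  | add u v _ _ hu hv => simp [hu, hv]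
  | smul c u _ hu => simp [hu]

/-- existence of a linear left inverse to left multiplication by `X` -/
theorem exists_L {ι : B →ₐ[ℂ] A} {X : A} (hfree : IsFreeProduct ι X)
    (D : A →ₗ[ℂ] A ⊗[ℂ] A)
    (hD : ∀ p q : A, D (p * q) = (p ⊗ₜ[ℂ] (1 : A)) * D q + D p * ((1 : A) ⊗ₜ[ℂ] q))
    (hDX : D X = (1 : A) ⊗ₜ[ℂ] (1 : A)) :
    ∃ L : A →ₗ[ℂ] A, ∀ p, L (X * p) = p := by
  obtain ⟨ε, ⟨-, h2⟩, -⟩ := hfree A ι 0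
  refine ⟨LinearMap.mul' ℂ A ∘ₗ
    (Algebra.TensorProduct.map ε (AlgHom.id ℂ A)).toLinearMap ∘ₗ D, fun p => ?_⟩
  have hm : Algebra.TensorProduct.map ε (AlgHom.id ℂ A) ((X ⊗ₜ[ℂ] (1 : A)) * D p) = 0 := by
    rw [map_mul, Algebra.TensorProduct.map_tmul, h2, TensorProduct.zero_tmul, zero_mul]
  simp only [LinearMap.comp_apply, AlgHom.toLinearMap_apply, hD, hDX, map_add, hm]
  simp

/-- existence of the projections to the homogeneous components -/
theorem exists_proj {ι : B →ₐ[ℂ] A} {X : A} (hfree : IsFreeProduct ι X) :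
    ∃ π : ℕ → A →ₗ[ℂ] A,
      (∀ n b l, π n (mono ι X b l) = if l.length = n then mono ι X b l else 0) ∧
      ∀ q, ∃ s : Finset ℕ, q = ∑ n ∈ s, π n q := by
  obtain ⟨ψ, ⟨h1, h2⟩, -⟩ := hfree (Polynomial A)
    ((Polynomial.CAlgHom (R := ℂ) (A := A)).comp ι) (Polynomial.C X * Polynomial.X)
  have hι : ∀ b, ψ (ι b) = Polynomial.C (ι b) := fun b => DFunLike.congr_fun h1 b
  have hP : ∀ l, ψ (Pw ι X l) = Polynomial.C (Pw ι X l) * Polynomial.X ^ l.length := by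
    intro l
    induction l with
    | nil => simp [Pw_nil]
    | cons c l ih =>
      rw [Pw_cons, map_mul, map_mul, ih, h2, hι]
      simp only [map_mul, List.length_cons, pow_succ']
      simp only [mul_assoc, Polynomial.X_mul_C, Polynomial.X_mul]
  have hM : ∀ b l, ψ (mono ι X b l) =
      Polynomial.C (mono ι X b l) * Polynomial.X ^ l.length := by
    intro b l
    rw [mono_eq, map_mul, hP, hι, map_mul, mul_assoc]
  refine ⟨fun n => ((Polynomial.lcoeff A n).restrictScalars ℂ) ∘ₗ ψ.toLinearMap, ?_, ?_⟩
  · intro n b l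
    simp [hM, Polynomial.coeff_C_mul, Polynomial.coeff_X_pow, eq_comm]
  · intro q
    refine ⟨(ψ q).support, ?_⟩
    have := mono_ext hfree LinearMap.id
      (((Polynomial.leval (1 : A)).restrictScalars ℂ) ∘ₗ ψ.toLinearMap) (by
        intro b l
        simp [hM]) q
    simp only [LinearMap.id_apply, LinearMap.comp_apply, LinearMap.restrictScalars_apply,
      Polynomial.leval_apply, AlgHom.toLinearMap_apply, Polynomial.eval_eq_sum,
      Polynomial.sum_def, one_pow, mul_one] at this
    exact this

theorem D_Pw {ι : B →ₐ[ℂ] A} {X : A} (D : A →ₗ[ℂ] A ⊗[ℂ] A)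
    (hD : ∀ p q : A, D (p * q) = (p ⊗ₜ[ℂ] (1 : A)) * D q + D p * ((1 : A) ⊗ₜ[ℂ] q))
    (hDX : D X = (1 : A) ⊗ₜ[ℂ] (1 : A)) (hDB : ∀ b : B, D (ι b) = 0)
    (L : A →ₗ[ℂ] A) (hL : ∀ p, L (X * p) = p) (l : List B) :
    D (Pw ι X l) = ∑ k ∈ Finset.range l.length,
      Pw ι X (l.take k) ⊗ₜ[ℂ] L (Pw ι X (l.drop k)) := by
  induction l with
  | nil =>
    have : D (ι 1) = 0 := hDB 1
    simpa [Pw_nil] using this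
  | cons c l ih =>
    rw [List.length_cons, Finset.sum_range_succ', Pw_cons, hD, ih, hD, hDX, hDB, Finset.mul_sum]
    simp [Pw_cons, Pw_nil, mul_assoc, hL]

theorem cyc_Pw {ι : B →ₐ[ℂ] A} {X : A} (D : A →ₗ[ℂ] A ⊗[ℂ] A)
    (hD : ∀ p q : A, D (p * q) = (p ⊗ₜ[ℂ] (1 : A)) * D q + D p * ((1 : A) ⊗ₜ[ℂ] q))
    (hDX : D X = (1 : A) ⊗ₜ[ℂ] (1 : A)) (hDB : ∀ b : B, D (ι b) = 0)
    (L : A →ₗ[ℂ] A) (hL : ∀ p, L (X * p) = p) (l : List B) :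
    cyclicDer D (Pw ι X l) = ∑ k ∈ Finset.range l.length, L (Pw ι X (l.rotate k)) := by
  simp only [cyclicDer, LinearMap.comp_apply, D_Pw D hD hDX hDB L hL l, map_sum]
  refine Finset.sum_congr rfl fun k hk => ?_
  have hk : k < l.length := Finset.mem_range.1 hk
  rw [List.rotate_eq_drop_append_take hk.le]
  obtain ⟨c, m, hm⟩ : ∃ c m, l.drop k = c :: m := ⟨_, _, List.drop_eq_getElem_cons hk⟩
  rw [hm]
  simp [Pw_cons, Pw_append, mul_assoc, hL]

theorem cyc_comm (D : A →ₗ[ℂ] A ⊗[ℂ] A)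
    (hD : ∀ p q : A, D (p * q) = (p ⊗ₜ[ℂ] (1 : A)) * D q + D p * ((1 : A) ⊗ₜ[ℂ] q))
    (a b : A) : cyclicDer D (a * b) = cyclicDer D (b * a) := by
  have key : ∀ (u : A ⊗[ℂ] A) (a : A),
      LinearMap.mul' ℂ A (TensorProduct.comm ℂ A A ((a ⊗ₜ[ℂ] (1 : A)) * u)) =
      LinearMap.mul' ℂ A (TensorProduct.comm ℂ A A (u * ((1 : A) ⊗ₜ[ℂ] a))) := by
    intro u a
    induction u using TensorProduct.induction_on with
    | zero => simp
    | tmul x y => simp [mul_assoc]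
    | add x y hx hy => simp only [mul_add, add_mul, map_add, hx, hy]
  simp only [cyclicDer, LinearMap.comp_apply, hD, map_add, LinearEquiv.coe_coe, key]
  rw [add_comm]

end Helpers

/-- With `ξ` the rotation `ξ(b₀Xb₁⋯Xbₙ) = Xb₁⋯Xbₙb₀` and `θ(p) = [X, p] = Xp − pX`,
the equation `δ_{X:B}[p] = q` has a solution `p ∈ B⟨X⟩` iff `(ξ∘θ)[q] = 0`. -/
theorem cyclicDer_range_iff_xi_theta
    {B A : Type} [Ring B] [Algebra ℂ B] [Ring A] [Algebra ℂ A]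
    (ι : B →ₐ[ℂ] A) (X : A) (hfree : IsFreeProduct ι X)
    (D : A →ₗ[ℂ] A ⊗[ℂ] A)
    (hD : ∀ p q : A, D (p * q) = (p ⊗ₜ[ℂ] (1 : A)) * D q + D p * ((1 : A) ⊗ₜ[ℂ] q))
    (hDX : D X = (1 : A) ⊗ₜ[ℂ] (1 : A))
    (hDB : ∀ b : B, D (ι b) = 0)
    (ξ : A →ₗ[ℂ] A)
    (hξ : ∀ (b0 : B) (bs : List B),
      ξ (mono ι X b0 bs) = (bs.map (fun b => X * ι b)).prod * ι b0) :
    ∀ q : A, (∃ p : A, cyclicDer D p = q) ↔ ξ (X * q - q * X) = 0 := by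
  obtain ⟨L, hL⟩ := exists_L hfree D hD hDX
  obtain ⟨π, hπ, hsum⟩ := exists_proj hfree
  have hπP : ∀ n l, π n (Pw ι X l) = if l.length = n then Pw ι X l else 0 := by
    intro n l
    have := hπ n 1 l
    simpa [mono_eq] using this
  have hξP : ∀ l, ξ (Pw ι X l) = Pw ι X l := by
    intro l
    have := hξ 1 l
    rw [mono_eq] at this
    simpa [Pw] using this
  have hξX : ∀ q, ξ (X * q) = X * q := by
    intro q
    refine mono_ext hfree (ξ ∘ₗ LinearMap.mulLeft ℂ X) (LinearMap.mulLeft ℂ X) ?_ q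
    intro b l
    simp [X_mul_mono, hξP]
  have hrot : ∀ b l, ξ (mono ι X b l * X) = Pw ι X (l ++ [b]) := by
    intro b l
    have h := hξ b (l ++ [1])
    have e : mono ι X b (l ++ [1]) = mono ι X b l * X := by
      simp [mono_eq, Pw_append, Pw_cons, Pw_nil, mul_assoc]
    rw [← e, h]
    simp [Pw, mul_assoc]
  have hXL : ∀ l : List B, l ≠ [] → X * L (Pw ι X l) = Pw ι X l := by
    intro l hl
    cases l with
    | nil => exact absurd rfl hl
    | cons c l => rw [← X_mul_mono, hL]
  have hτ : ∀ l : List B, l ≠ [] → ξ (L (Pw ι X l) * X) = Pw ι X (l.rotate 1) := by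
    intro l hl
    cases l with
    | nil => exact absurd rfl hl
    | cons c l => rw [← X_mul_mono, hL, hrot]; simp
  have hcyc := cyc_Pw D hD hDX hDB L hL
  intro q
  constructor
  · rintro ⟨p, rfl⟩
    have fwdP : ∀ l, ξ (X * cyclicDer D (Pw ι X l) - cyclicDer D (Pw ι X l) * X) = 0 := by
      intro l
      rcases eq_or_ne l [] with rfl | hl
      · simp [hcyc]
      have hne : ∀ k, l.rotate k ≠ [] := fun k => by simpa using hl
      rw [hcyc, Finset.mul_sum, Finset.sum_mul, map_sub, map_sum, map_sum]
      have e1 : ∀ k, ξ (X * L (Pw ι X (l.rotate k))) = Pw ι X (l.rotate k) := fun k => by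
        rw [hXL _ (hne k), hξP]
      have e2 : ∀ k, ξ (L (Pw ι X (l.rotate k)) * X) = Pw ι X (l.rotate (k + 1)) := fun k => by
        rw [hτ _ (hne k), List.rotate_rotate]
      simp only [e1, e2]
      have a1 := Finset.sum_range_succ (fun k => Pw ι X (l.rotate k)) l.length
      have a2 := Finset.sum_range_succ' (fun k => Pw ι X (l.rotate k)) l.length
      simp only [List.rotate_length, List.rotate_zero] at a1 a2
      rw [sub_eq_zero]
      exact add_right_cancel (a1.symm.trans a2)
    refine mono_ext hfree (ξ ∘ₗ (LinearMap.mulLeft ℂ X - LinearMap.mulRight ℂ X) ∘ₗ cyclicDer D)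
      0 ?_ p
    intro b l
    have : cyclicDer D (mono ι X b l) = 0 ∨ ∃ m, cyclicDer D (mono ι X b l) =
        cyclicDer D (Pw ι X m) := by
      rcases List.eq_nil_or_concat l with rfl | ⟨l, c, rfl⟩
      · left; simp [cyclicDer, mono_eq, Pw_nil, hDB]
      · right
        refine ⟨l ++ [c * b], ?_⟩
        rw [mono_eq, cyc_comm D hD]
        simp [Pw_append, Pw_cons, Pw_nil, mul_assoc]
    rcases this with h | ⟨m, h⟩
    · simp [h]
    · simpa [h] using fwdP m
  · intro hq
    rw [map_sub, hξX, sub_eq_zero] at hq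
    have hπX : ∀ n a, π (n + 1) (X * a) = X * π n a := by
      intro n a
      refine mono_ext hfree (π (n + 1) ∘ₗ LinearMap.mulLeft ℂ X) (LinearMap.mulLeft ℂ X ∘ₗ π n)
        ?_ a
      intro b l
      simp only [LinearMap.comp_apply, LinearMap.mulLeft_apply, hπ, X_mul_mono, hπP]
      by_cases h : l.length = n <;> simp [h, X_mul_mono]
    have hπξ : ∀ n a, π (n + 1) (ξ (a * X)) = ξ (π n a * X) := by
      intro n a
      refine mono_ext hfree (π (n + 1) ∘ₗ ξ ∘ₗ LinearMap.mulRight ℂ X)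
        (ξ ∘ₗ LinearMap.mulRight ℂ X ∘ₗ π n) ?_ a
      intro b l
      simp only [LinearMap.comp_apply, LinearMap.mulRight_apply, hπ, hrot, hπP]
      by_cases h : l.length = n <;> simp [h, hrot]
    let τ : A →ₗ[ℂ] A := ξ ∘ₗ LinearMap.mulRight ℂ X ∘ₗ L
    have hτk : ∀ (l : List B), l ≠ [] → ∀ k, (τ ^ k) (Pw ι X l) = Pw ι X (l.rotate k) := by
      intro l hl k
      induction k with
      | zero => simp
      | succ k ih =>
        rw [pow_succ', Module.End.mul_apply, ih]
        have hne : l.rotate k ≠ [] := by simpa using hl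
        have := hτ _ hne
        rw [List.rotate_rotate] at this
        exact this
    have hδ : ∀ n a, cyclicDer D (X * π n a) =
        ∑ k ∈ Finset.range (n + 1), L ((τ ^ k) (X * π n a)) := by
      intro n a
      have := mono_ext hfree (cyclicDer D ∘ₗ LinearMap.mulLeft ℂ X ∘ₗ π n)
        (∑ k ∈ Finset.range (n + 1), L ∘ₗ (τ ^ k) ∘ₗ LinearMap.mulLeft ℂ X ∘ₗ π n) (by
          intro b l
          simp only [LinearMap.comp_apply, LinearMap.mulLeft_apply, hπ, LinearMap.sum_apply]
          by_cases h : l.length = n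
          · simp only [h, if_true, X_mul_mono, hcyc, List.length_cons]
            refine Finset.sum_congr rfl fun k _ => ?_
            rw [hτk _ (by simp)]
          · simp [h]) a
      simpa [LinearMap.sum_apply] using this
    have hfix : ∀ n, cyclicDer D (X * π n q) = ((n : ℂ) + 1) • π n q := by
      intro n
      have h1 : τ (X * π n q) = X * π n q := by
        change ξ (L (X * π n q) * X) = _
        rw [hL, ← hπξ, ← hq, hπX]
      have h2 : ∀ k, (τ ^ k) (X * π n q) = X * π n q := by
        intro k
        induction k with
        | zero => simp
        | succ k ih => rw [pow_succ', Module.End.mul_apply, ih, h1]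
      rw [hδ]
      simp only [h2, hL, Finset.sum_const, Finset.card_range]
      rw [← Nat.cast_smul_eq_nsmul ℂ]
      push_cast
      rfl
    obtain ⟨s, hs⟩ := hsum q
    refine ⟨∑ n ∈ s, ((n : ℂ) + 1)⁻¹ • (X * π n q), ?_⟩
    rw [map_sum]
    conv_rhs => rw [hs]
    refine Finset.sum_congr rfl fun n _ => ?_
    rw [map_smul, hfix, smul_smul, inv_mul_cancel₀ (Nat.cast_add_one_ne_zero n), one_smul]
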